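/- arXiv:1205.3454 — 3 statements merged into one kernel-verified Lean document; each statement's English description precedes it below -/
import Mathlib

section
/- Let S be an idempotent covered semigroup. Then the map φ : S → T(S) defined by s ↦ (s,s,σ) is an injective semigroup homomorphism, i.e., it embeds S into the semiband T(S). -/
namespace SemibandEmbed

/-- The two-element right-zero semigroup `R₂ = {σ, τ}`. -/
inductive R2 : Type where
  | σ : R2
  | τ : R2
  deriving DecidableEq

section GreenDefs

variable {S : Type*} [Semigroup S]

/-- Green's relation 𝓡 : `a 𝓡 b` iff `a S¹ = b S¹` (inside `S¹ = WithOne S`). -/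
def greenR (a b : S) : Prop :=
  {x : WithOne S | ∃ u : WithOne S, x = (a : WithOne S) * u} =
    {x : WithOne S | ∃ u : WithOne S, x = (b : WithOne S) * u}

/-- Green's relation 𝓛 : `a 𝓛 b` iff `S¹ a = S¹ b`. -/
def greenL (a b : S) : Prop :=
  {x : WithOne S | ∃ u : WithOne S, x = u * (a : WithOne S)} =
    {x : WithOne S | ∃ u : WithOne S, x = u * (b : WithOne S)}

/-- Green's relation 𝓗 = 𝓛 ∩ 𝓡. -/
def greenH (a b : S) : Prop := greenL a b ∧ greenR a b

/-- Green's relation 𝓓 : `a 𝓓 b` iff `a 𝓡 c` and `c 𝓛 b` for some `c`. -/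
def greenD (a b : S) : Prop := ∃ c : S, greenR a c ∧ greenL c b

/-- Green's relation 𝓙 : `a 𝓙 b` iff `S¹ a S¹ = S¹ b S¹`. -/
def greenJ (a b : S) : Prop :=
  {x : WithOne S | ∃ u v : WithOne S, x = u * (a : WithOne S) * v} =
    {x : WithOne S | ∃ u v : WithOne S, x = u * (b : WithOne S) * v}

/-- Mitsch's natural partial order on a semigroup. -/
def natLe (a b : S) : Prop := ∃ x y : S, a = x * b ∧ a = b * y ∧ a = a * y

end GreenDefs

/-- A semigroup is idempotent covered if every element `s` satisfies `s e = s = f s`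
for some idempotents `e`, `f`. -/
def IdemCovered (S : Type*) [Semigroup S] : Prop :=
  ∀ s : S, ∃ e f : S, IsIdempotentElem e ∧ IsIdempotentElem f ∧ s * e = s ∧ f * s = s

/-- A semigroup is regular if every `a` satisfies `a x a = a` for some `x`. -/
def IsRegularSemigroup (S : Type*) [Semigroup S] : Prop :=
  ∀ a : S, ∃ x : S, a * x * a = a

/-- A semigroup is periodic if every element generates a finite monogenic subsemigroup,
i.e. `aᵐ = aⁿ` for some `0 < m < n` (powers computed in `S¹ = WithOne S`). -/
def IsPeriodic (S : Type*) [Semigroup S] : Prop :=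
  ∀ a : S, ∃ m n : ℕ, 0 < m ∧ m < n ∧ (a : WithOne S) ^ m = (a : WithOne S) ^ n

/-- `𝓗` is a left congruence. -/
def IsLeftCongH (S : Type*) [Semigroup S] : Prop :=
  ∀ a b c : S, greenH a b → greenH (c * a) (c * b)

/-- `𝓗` is a right congruence. -/
def IsRightCongH (S : Type*) [Semigroup S] : Prop :=
  ∀ a b c : S, greenH a b → greenH (a * c) (b * c)

/-- A semigroup is completely regular if every element is 𝓗-related to an idempotent. -/
def IsCompletelyRegular (S : Type*) [Semigroup S] : Prop :=
  ∀ a : S, ∃ e : S, IsIdempotentElem e ∧ greenH a e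

section SemidirectProduct

variable {S : Type*} [Semigroup S]

/-- The multiplication of the semidirect product `(S × S) * R₂`:
`(t₁,s₁,σ)·(t₂,s₂,α) = (t₁s₂, s₁s₂, α)` and `(t₁,s₁,τ)·(t₂,s₂,α) = (t₁t₂, s₁t₂, α)`. -/
def sdMul (x y : S × S × R2) : S × S × R2 :=
  match x, y with
  | (t₁, s₁, R2.σ), (_, s₂, α) => (t₁ * s₂, s₁ * s₂, α)
  | (t₁, s₁, R2.τ), (t₂, _, α) => (t₁ * t₂, s₁ * t₂, α)

instance : Mul (S × S × R2) := ⟨sdMul⟩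

theorem sdMul_def (x y : S × S × R2) : x * y = sdMul x y := rfl

instance : Semigroup (S × S × R2) where
  mul_assoc x y z := by
    obtain ⟨t₁, s₁, α₁⟩ := x
    obtain ⟨t₂, s₂, α₂⟩ := y
    obtain ⟨t₃, s₃, α₃⟩ := z
    cases α₁ <;> cases α₂ <;> simp [sdMul_def, sdMul, mul_assoc]

/-- The set `E = {(s,t,α) ∈ E(T*R₂) : s ∈ S¹ t}`. -/
def Eset (S : Type*) [Semigroup S] : Set (S × S × R2) :=
  {x | IsIdempotentElem x ∧ ∃ a : WithOne S, (x.1 : WithOne S) = a * (x.2.1 : WithOne S)}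

/-- `T(S)`: the subsemigroup of the semidirect product generated by `E`. -/
def TS (S : Type*) [Semigroup S] : Subsemigroup (S × S × R2) :=
  Subsemigroup.closure (Eset S)

/-- Green's `𝓛` is a right congruence. -/
theorem greenL_mul_right {S : Type*} [Semigroup S] {a b : S} (hab : greenL a b) (c : S) :
    greenL (a * c) (b * c) := by
  have key : ∀ {a b : S}, greenL a b → ∀ x : WithOne S,
      (∃ u : WithOne S, x = u * ((a * c : S) : WithOne S)) →
      (∃ u : WithOne S, x = u * ((b * c : S) : WithOne S)) := by
    intro a b hab x hx
    obtain ⟨u, rfl⟩ := hx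
    have h1 : (u * (a : WithOne S)) ∈
        {x : WithOne S | ∃ u : WithOne S, x = u * (a : WithOne S)} := ⟨u, rfl⟩
    rw [greenL] at hab
    rw [hab] at h1
    obtain ⟨w, hw⟩ := h1
    refine ⟨w, ?_⟩
    rw [WithOne.coe_mul, WithOne.coe_mul, ← mul_assoc, hw, mul_assoc]
  have hab' : greenL b a := hab.symm
  ext x
  exact ⟨key hab x, key hab' x⟩

/-- `R(S) = {(s,t,α) ∈ T(S) : s 𝓛 t}`, a subsemigroup of `T(S)`. -/
def RS (S : Type*) [Semigroup S] : Subsemigroup ↥(TS S) where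
  carrier := {x | greenL (x : S × S × R2).1 (x : S × S × R2).2.1}
  mul_mem' := by
    rintro ⟨⟨s, t, α⟩, hx⟩ ⟨⟨u, v, β⟩, hy⟩ hxs hys
    simp only [Set.mem_setOf_eq] at hxs hys ⊢
    cases α <;> exact greenL_mul_right hxs _

end SemidirectProduct

section DiagonalEmbedding

variable {S : Type*} [Semigroup S]

theorem mk_σ_mul (t s : S) (x : S × S × R2) :
    ((t, s, R2.σ) : S × S × R2) * x = (t * x.2.1, s * x.2.1, x.2.2) := rfl

theorem mk_τ_mul (t s : S) (x : S × S × R2) :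
    ((t, s, R2.τ) : S × S × R2) * x = (t * x.1, s * x.1, x.2.2) := rfl

theorem isIdempotentElem_mk_σ {t s : S} :
    IsIdempotentElem ((t, s, R2.σ) : S × S × R2) ↔ t * s = t ∧ IsIdempotentElem s := by
  simp only [IsIdempotentElem, mk_σ_mul, Prod.mk.injEq, and_true]

theorem isIdempotentElem_mk_τ {t s : S} :
    IsIdempotentElem ((t, s, R2.τ) : S × S × R2) ↔ IsIdempotentElem t ∧ s * t = s := by
  simp only [IsIdempotentElem, mk_τ_mul, Prod.mk.injEq, and_true]

theorem Eset_subset_TS : Eset S ⊆ TS S := Subsemigroup.subset_closure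

theorem mk_σ_mem_Eset {s e : S} (he : IsIdempotentElem e) (hse : s * e = s) :
    (s, e, R2.σ) ∈ Eset S :=
  ⟨isIdempotentElem_mk_σ.2 ⟨hse, he⟩, s, by rw [← WithOne.coe_mul, hse]⟩

theorem mk_self_τ_mem_Eset {f : S} (hf : IsIdempotentElem f) : (f, f, R2.τ) ∈ Eset S :=
  ⟨isIdempotentElem_mk_τ.2 ⟨hf, hf⟩, 1, (one_mul _).symm⟩

theorem mk_self_τ_mul_mk_σ {f s : S} (hfs : f * s = s) (e : S) :
    ((f, f, R2.τ) : S × S × R2) * (s, e, R2.σ) = (s, s, R2.σ) := by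
  rw [mk_τ_mul, hfs]

theorem mk_self_σ_mem_TS {s e f : S} (he : IsIdempotentElem e) (hf : IsIdempotentElem f)
    (hse : s * e = s) (hfs : f * s = s) : (s, s, R2.σ) ∈ TS S := by
  rw [← mk_self_τ_mul_mk_σ hfs e]
  exact mul_mem (Eset_subset_TS (mk_self_τ_mem_Eset hf)) (Eset_subset_TS (mk_σ_mem_Eset he hse))

/-- The diagonal homomorphism `s ↦ (s, s, σ)`, whose corestriction to `T(S)` is the embedding `φ`.
Its codomain is the whole semidirect product; membership in `T(S)` is a separate statement. -/
def diagHom (S : Type*) [Semigroup S] : S →ₙ* S × S × R2 where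
  toFun s := (s, s, R2.σ)
  map_mul' _ _ := rfl

theorem diagHom_injective : Function.Injective (diagHom S) :=
  fun _ _ h => congrArg Prod.fst h

theorem IdemCovered.diagHom_mem_TS (hS : IdemCovered S) (s : S) : diagHom S s ∈ TS S :=
  let ⟨_, _, he, hf, hse, hfs⟩ := hS s
  mk_self_σ_mem_TS he hf hse hfs

end DiagonalEmbedding

/-- `s ↦ (s,s,σ)` embeds `S` into the semiband `T(S)`. -/
theorem statement_3 {S : Type*} [Semigroup S] (hS : IdemCovered S) :
    ∃ φ : S → ↥(TS S), (∀ s : S, (φ s : S × S × R2) = (s, s, R2.σ)) ∧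
      (∀ s t : S, φ (s * t) = φ s * φ t) ∧ Function.Injective φ := by
  let φ : S →ₙ* TS S := (diagHom S).codRestrict (TS S) hS.diagHom_mem_TS
  exact ⟨φ, fun _ => rfl, map_mul φ, diagHom_injective.codRestrict hS.diagHom_mem_TS⟩

end SemibandEmbed
end

section
/- Let S be an idempotent covered semigroup and let (s,t,α), (u,v,β) ∈ T(S). Then (s,t,α) 𝓗 (u,v,β) in T(S) if and only if α = β, t 𝓗 v in S, and there exists a ∈ S¹ with s = at and u = av. -/
namespace SemibandEmbed

/-!
In `T*R₂` right multiplication multiplies the first two coordinates of `(s, t, α)` by one and the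
same element, so a factorization `s = a t` is passed on, with the same `a`, to all right multiples.
Conversely, let `s = a t` and `u = a v`. If `v = t`, then `u = s`; if `v = t z` with `z ∈ S`, then
`(u, v, α) = (s, t, α)(z, z, α)`; if `v = z t` with `z ∈ S`, then
`(u, v, α) = (a z, z, σ)(s, t, α)`. These factors have first coordinate in `S¹` times the second,
and when `S` is idempotent covered `T(S)` consists of all such triples.
-/

section GreenPreorders

variable {S : Type*} [Semigroup S] {a b : S}

/-- Green's preorder `≤_𝓛`, that is, `a ∈ S¹ b`; its symmetric part is `𝓛`. -/
def leL (a b : S) : Prop := ∃ c : WithOne S, (a : WithOne S) = c * b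

/-- Green's preorder `≤_𝓡`, that is, `a ∈ b S¹`; its symmetric part is `𝓡`. -/
def leR (a b : S) : Prop := ∃ c : WithOne S, (a : WithOne S) = b * c

theorem greenL_iff_leL_and_leL : greenL a b ↔ leL a b ∧ leL b a := by
  constructor
  · intro h
    exact ⟨h.subset ⟨1, (one_mul _).symm⟩, h.superset ⟨1, (one_mul _).symm⟩⟩
  · rintro ⟨⟨c, hc⟩, ⟨d, hd⟩⟩
    ext x
    constructor
    · rintro ⟨w, rfl⟩
      exact ⟨w * c, by rw [hc, mul_assoc]⟩
    · rintro ⟨w, rfl⟩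
      exact ⟨w * d, by rw [hd, mul_assoc]⟩

theorem greenR_iff_leR_and_leR : greenR a b ↔ leR a b ∧ leR b a := by
  constructor
  · intro h
    exact ⟨h.subset ⟨1, (mul_one _).symm⟩, h.superset ⟨1, (mul_one _).symm⟩⟩
  · rintro ⟨⟨c, hc⟩, ⟨d, hd⟩⟩
    ext x
    constructor
    · rintro ⟨w, rfl⟩
      exact ⟨c * w, by rw [hc, mul_assoc]⟩
    · rintro ⟨w, rfl⟩
      exact ⟨d * w, by rw [hd, mul_assoc]⟩

theorem leL_iff_eq_or_exists_mul : leL a b ↔ a = b ∨ ∃ c : S, a = c * b := by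
  simp only [leL, WithOne.exists, one_mul, ← WithOne.coe_mul, WithOne.coe_inj]

theorem leR_iff_eq_or_exists_mul : leR a b ↔ a = b ∨ ∃ c : S, a = b * c := by
  simp only [leR, WithOne.exists, mul_one, ← WithOne.coe_mul, WithOne.coe_inj]

theorem leL_coe_iff {T : Subsemigroup S} {x y : T} :
    leL x y ↔ (x : S) = y ∨ ∃ z ∈ T, (x : S) = z * y := by
  simp only [leL_iff_eq_or_exists_mul, Subtype.ext_iff, Subtype.exists, exists_prop,
    MulMemClass.coe_mul]

theorem leR_coe_iff {T : Subsemigroup S} {x y : T} :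
    leR x y ↔ (x : S) = y ∨ ∃ z ∈ T, (x : S) = y * z := by
  simp only [leR_iff_eq_or_exists_mul, Subtype.ext_iff, Subtype.exists, exists_prop,
    MulMemClass.coe_mul]

theorem exists_coe_eq_mul_coe (c : WithOne S) (a : S) : ∃ x : S, (x : WithOne S) = c * a := by
  cases c with
  | one => exact ⟨a, (one_mul _).symm⟩
  | coe c => exact ⟨c * a, rfl⟩

theorem leL.refl (a : S) : leL a a := leL_iff_eq_or_exists_mul.2 (.inl rfl)

theorem leL.mul_right (h : leL a b) (c : S) : leL (a * c) (b * c) := by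
  obtain ⟨d, hd⟩ := h
  exact ⟨d, by rw [WithOne.coe_mul, WithOne.coe_mul, hd, mul_assoc]⟩

theorem leL.mul_left (h : leL a b) (c : S) : leL (c * a) b := by
  obtain ⟨d, hd⟩ := h
  exact ⟨c * d, by rw [WithOne.coe_mul, hd, mul_assoc]⟩

theorem leL.exists_mul_eq_of_isIdempotentElem {e : S} (h : leL a b) (he : IsIdempotentElem e)
    (heb : e * b = b) : ∃ x : S, x * e = x ∧ x * b = a := by
  obtain rfl | ⟨c, rfl⟩ := leL_iff_eq_or_exists_mul.1 h
  · exact ⟨e, he, heb⟩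
  · exact ⟨c * e, by rw [mul_assoc, he.eq], by rw [mul_assoc, heb]⟩

end GreenPreorders

section LeLTriples

variable {S : Type*} [Semigroup S]

theorem mk_σ_mul_s9 (a b c d : S) (α : R2) :
    ((a, b, R2.σ) : S × S × R2) * (c, d, α) = (a * d, b * d, α) := rfl

theorem mk_τ_mul_s9 (a b c d : S) (α : R2) :
    ((a, b, R2.τ) : S × S × R2) * (c, d, α) = (a * c, b * c, α) := rfl

/-- The subsemigroup `{(s, t, α) : s ∈ S¹ t}` of `T*R₂`. It is defined for every semigroup `S` and
equals `T(S)` when `S` is idempotent covered. -/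
def leLTriples (S : Type*) [Semigroup S] : Subsemigroup (S × S × R2) where
  carrier := {x | leL x.1 x.2.1}
  mul_mem' := by
    rintro ⟨s, t, α⟩ ⟨u, v, β⟩ hst -
    cases α
    · exact leL.mul_right hst v
    · exact leL.mul_right hst u

theorem mk_mem_leLTriples {s t : S} {α : R2} :
    ((s, t, α) : S × S × R2) ∈ leLTriples S ↔ leL s t := Iff.rfl

theorem TS_le_leLTriples : TS S ≤ leLTriples S :=
  Subsemigroup.closure_le.2 fun _ hx => hx.2

theorem mk_σ_mem_TS {a e : S} (hae : a * e = a) (he : IsIdempotentElem e) :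
    ((a, e, R2.σ) : S × S × R2) ∈ TS S :=
  Subsemigroup.subset_closure
    ⟨by rw [IsIdempotentElem, mk_σ_mul_s9, hae, he.eq], a, by rw [← WithOne.coe_mul, hae]⟩

theorem mk_τ_mem_TS {e : S} (he : IsIdempotentElem e) : ((e, e, R2.τ) : S × S × R2) ∈ TS S :=
  Subsemigroup.subset_closure ⟨by rw [IsIdempotentElem, mk_τ_mul_s9, he.eq], leL.refl e⟩

theorem leLTriples_le_TS (hS : IdemCovered S) : leLTriples S ≤ TS S := by
  rintro ⟨s, t, α⟩ hst
  obtain ⟨e, f, he, hf, hte, hft⟩ := hS t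
  obtain ⟨x, hxf, hxt⟩ := (mk_mem_leLTriples.1 hst).exists_mul_eq_of_isIdempotentElem hf hft
  have hse : s * e = s := by rw [← hxt, mul_assoc, hte]
  have factor_σ : ((s, t, R2.σ) : S × S × R2) = (x, f, R2.σ) * (f, f, R2.τ) * (t, e, R2.σ) := by
    rw [mk_σ_mul_s9, mk_τ_mul_s9, hxf, hf.eq, hxt, hft]
  have mem_σ : ((s, t, R2.σ) : S × S × R2) ∈ TS S :=
    factor_σ ▸ mul_mem (mul_mem (mk_σ_mem_TS hxf hf) (mk_τ_mem_TS hf)) (mk_σ_mem_TS hte he)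
  cases α with
  | σ => exact mem_σ
  | τ =>
    have factor_τ : ((s, t, R2.τ) : S × S × R2) = (s, t, R2.σ) * (e, e, R2.τ) := by
      rw [mk_σ_mul_s9, hse, hte]
    exact factor_τ ▸ mul_mem mem_σ (mk_τ_mem_TS he)

theorem TS_eq_leLTriples (hS : IdemCovered S) : TS S = leLTriples S :=
  le_antisymm TS_le_leLTriples (leLTriples_le_TS hS)

end LeLTriples

section GreenOnLeLTriples

variable {S : Type*} [Semigroup S] {s t u v : S} {α β : R2}

theorem exists_common_right_factor_of_leR {T : Subsemigroup (S × S × R2)}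
    {hx : (s, t, α) ∈ T} {hy : (u, v, β) ∈ T}
    (h : leR (⟨(u, v, β), hy⟩ : T) ⟨(s, t, α), hx⟩) :
    ∃ z : WithOne S, (u : WithOne S) = s * z ∧ (v : WithOne S) = t * z := by
  obtain h_eq | ⟨⟨p, q, γ⟩, -, h_eq⟩ := leR_coe_iff.1 h
  · cases h_eq
    exact ⟨1, (mul_one _).symm, (mul_one _).symm⟩
  · cases α <;> cases h_eq
    · exact ⟨q, rfl, rfl⟩
    · exact ⟨p, rfl, rfl⟩

theorem index_eq_and_leL_of_leL {hx : (s, t, α) ∈ leLTriples S} {hy : (u, v, β) ∈ leLTriples S}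
    (h : leL (⟨(u, v, β), hy⟩ : leLTriples S) ⟨(s, t, α), hx⟩) : β = α ∧ leL v t := by
  obtain h_eq | ⟨⟨p, q, γ⟩, -, h_eq⟩ := leL_coe_iff.1 h
  · cases h_eq
    exact ⟨rfl, leL.refl _⟩
  · cases γ <;> cases h_eq
    · exact ⟨rfl, (leL.refl t).mul_left q⟩
    · exact ⟨rfl, (mk_mem_leLTriples.1 hx).mul_left q⟩

theorem leR_mk_of_leR_of_eq_mul {hx : (s, t, α) ∈ leLTriples S} {hy : (u, v, α) ∈ leLTriples S}
    {a : WithOne S} (hs : (s : WithOne S) = a * t) (hu : (u : WithOne S) = a * v)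
    (h : leR v t) : leR (⟨(u, v, α), hy⟩ : leLTriples S) ⟨(s, t, α), hx⟩ := by
  refine leR_coe_iff.2 ?_
  obtain rfl | ⟨z, rfl⟩ := leR_iff_eq_or_exists_mul.1 h
  · obtain rfl : u = s := WithOne.coe_inj.1 (hu.trans hs.symm)
    exact .inl rfl
  · obtain rfl : u = s * z := by
      rw [← WithOne.coe_inj, hu, WithOne.coe_mul, WithOne.coe_mul, hs, mul_assoc]
    exact .inr ⟨(z, z, α), leL.refl z, by cases α <;> rfl⟩

theorem leL_mk_of_leL_of_eq_mul {hx : (s, t, α) ∈ leLTriples S} {hy : (u, v, α) ∈ leLTriples S}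
    {a : WithOne S} (hs : (s : WithOne S) = a * t) (hu : (u : WithOne S) = a * v)
    (h : leL v t) : leL (⟨(u, v, α), hy⟩ : leLTriples S) ⟨(s, t, α), hx⟩ := by
  refine leL_coe_iff.2 ?_
  obtain rfl | ⟨z, rfl⟩ := leL_iff_eq_or_exists_mul.1 h
  · obtain rfl : u = s := WithOne.coe_inj.1 (hu.trans hs.symm)
    exact .inl rfl
  · obtain ⟨x, hxz⟩ := exists_coe_eq_mul_coe a z
    obtain rfl : u = x * t := by
      rw [← WithOne.coe_inj, hu, WithOne.coe_mul, WithOne.coe_mul, hxz, mul_assoc]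
    exact .inr ⟨(x, z, R2.σ), ⟨a, hxz⟩, rfl⟩

theorem statement_9_general (hx : (s, t, α) ∈ leLTriples S) (hy : (u, v, β) ∈ leLTriples S) :
    greenH (⟨(s, t, α), hx⟩ : leLTriples S) ⟨(u, v, β), hy⟩ ↔
      α = β ∧ greenH t v ∧ ∃ a : WithOne S, (s : WithOne S) = a * (t : WithOne S) ∧
        (u : WithOne S) = a * (v : WithOne S) := by
  simp only [greenH, greenL_iff_leL_and_leL, greenR_iff_leR_and_leR]
  constructor
  · rintro ⟨⟨hL, hL'⟩, hR, hR'⟩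
    obtain ⟨hαβ, htv⟩ := index_eq_and_leL_of_leL hL
    obtain ⟨-, hvt⟩ := index_eq_and_leL_of_leL hL'
    obtain ⟨w, -, htw⟩ := exists_common_right_factor_of_leR hR
    obtain ⟨z, huz, hvz⟩ := exists_common_right_factor_of_leR hR'
    obtain ⟨a, ha⟩ := mk_mem_leLTriples.1 hx
    have hu : (u : WithOne S) = a * v := by rw [huz, ha, hvz, mul_assoc]
    exact ⟨hαβ, ⟨⟨htv, hvt⟩, ⟨w, htw⟩, ⟨z, hvz⟩⟩, a, ha, hu⟩
  · rintro ⟨rfl, ⟨⟨htv, hvt⟩, htv', hvt'⟩, a, hs, hu⟩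
    exact ⟨⟨leL_mk_of_leL_of_eq_mul hu hs htv, leL_mk_of_leL_of_eq_mul hs hu hvt⟩,
      leR_mk_of_leR_of_eq_mul hu hs htv', leR_mk_of_leR_of_eq_mul hs hu hvt'⟩

end GreenOnLeLTriples

/-- description of Green's relation 𝓗 on `T(S)`. -/
theorem statement_9 {S : Type*} [Semigroup S] (hS : IdemCovered S)
    (s t u v : S) (α β : R2)
    (hx : ((s, t, α) : S × S × R2) ∈ TS S) (hy : ((u, v, β) : S × S × R2) ∈ TS S) :
    greenH (⟨(s, t, α), hx⟩ : ↥(TS S)) ⟨(u, v, β), hy⟩ ↔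
      α = β ∧ greenH t v ∧ ∃ a : WithOne S, (s : WithOne S) = a * (t : WithOne S) ∧
        (u : WithOne S) = a * (v : WithOne S) := by
  revert hx hy
  rw [TS_eq_leLTriples hS]
  exact statement_9_general

end SemibandEmbed
end

section
/- Let S be an idempotent covered semigroup. If e = (s,t,σ) is an idempotent of T(S), then the map H_e → H_t sending (s₁,t₁,σ) to t₁ is a group isomorphism from the maximal subgroup H_e of T(S) onto the maximal subgroup H_t of S. If e = (s,t,τ) is an idempotent of T(S), then the map H_e → H_s sending (s₁,t₁,τ) to s₁ is a group isomorphism from the maximal subgroup H_e of T(S) onto the maximal subgroup H_s of S. -/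
/-!
For an idempotent `e` of a semigroup `M`, the `𝓗`-class of `e` is the group of units of the local
monoid `eMe`. An isomorphism between local monoids therefore restricts to an isomorphism between
maximal subgroups, and it suffices to compare the local monoids.

In `T*R₂` every product has the form `(t, s, α) * y = (t * c, s * c, β)`, where `β` is the last
component of `y` and `c` is the coordinate of `y` selected by `α`. Let `α` be the last component of
the idempotent `e`, and let `f` be the coordinate of `e` selected by `α`. Every `x` in the local
monoid at `e` satisfies `x = e * x`, so it is recovered from its selected coordinate, which lies in
`fSf`. Conversely, `w ∈ fSf` is the selected coordinate of `e * (w, w, α)`. The diagonal element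
`(w, w, α)` lies in `T(S)` because the idempotent `f` fixes `w` on both sides.
-/

namespace SemibandEmbed

section MaximalSubgroups

open Subsemigroup (corner mem_corner_iff)

variable {M N : Type*} [Semigroup M] [Semigroup N] {a e : M} {f : N}

theorem greenR_iff_of_isIdempotentElem (he : IsIdempotentElem e) :
    greenR a e ↔ e * a = a ∧ ∃ v, a * v = e := by
  constructor
  · intro h
    obtain ⟨u, hu⟩ := h.subset ⟨1, (mul_one (a : WithOne M)).symm⟩
    obtain ⟨v, hv⟩ := h.superset ⟨1, (mul_one (e : WithOne M)).symm⟩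
    refine ⟨WithOne.coe_injective ?_, ?_⟩
    · rw [WithOne.coe_mul, hu, ← mul_assoc, ← WithOne.coe_mul, he.eq]
    · cases v with
      | one =>
        obtain rfl : e = a := WithOne.coe_injective (hv.trans (mul_one _))
        exact ⟨e, he⟩
      | coe v => exact ⟨v, WithOne.coe_injective hv.symm⟩
  · rintro ⟨hea, v, hav⟩
    ext x
    constructor
    · rintro ⟨u, rfl⟩
      exact ⟨a * u, by rw [← mul_assoc, ← WithOne.coe_mul, hea]⟩
    · rintro ⟨u, rfl⟩
      exact ⟨v * u, by rw [← mul_assoc, ← WithOne.coe_mul, hav]⟩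

theorem greenL_iff_of_isIdempotentElem (he : IsIdempotentElem e) :
    greenL a e ↔ a * e = a ∧ ∃ v, v * a = e := by
  constructor
  · intro h
    obtain ⟨u, hu⟩ := h.subset ⟨1, (one_mul (a : WithOne M)).symm⟩
    obtain ⟨v, hv⟩ := h.superset ⟨1, (one_mul (e : WithOne M)).symm⟩
    refine ⟨WithOne.coe_injective ?_, ?_⟩
    · rw [WithOne.coe_mul, hu, mul_assoc, ← WithOne.coe_mul, he.eq]
    · cases v with
      | one =>
        obtain rfl : e = a := WithOne.coe_injective (hv.trans (one_mul _))
        exact ⟨e, he⟩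
      | coe v => exact ⟨v, WithOne.coe_injective hv.symm⟩
  · rintro ⟨hae, v, hva⟩
    ext x
    constructor
    · rintro ⟨u, rfl⟩
      exact ⟨u * a, by rw [mul_assoc, ← WithOne.coe_mul, hae]⟩
    · rintro ⟨u, rfl⟩
      exact ⟨u * v, by rw [mul_assoc, ← WithOne.coe_mul, hva]⟩

theorem self_mem_corner (he : IsIdempotentElem e) : e ∈ corner e :=
  (mem_corner_iff he).2 ⟨he, he⟩

theorem coe_mem_corner_iff {T : Subsemigroup M} {e x : T} (he : IsIdempotentElem e) :
    (x : M) ∈ corner (e : M) ↔ x ∈ corner e := by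
  rw [mem_corner_iff he, mem_corner_iff (congrArg Subtype.val he)]
  simp only [Subtype.ext_iff, MulMemClass.coe_mul]

theorem greenH_iff_exists_inverse_mem_corner (he : IsIdempotentElem e) :
    greenH a e ↔ a ∈ corner e ∧ ∃ b ∈ corner e, a * b = e ∧ b * a = e := by
  rw [greenH, greenL_iff_of_isIdempotentElem he, greenR_iff_of_isIdempotentElem he,
    mem_corner_iff he]
  constructor
  · rintro ⟨⟨hae, l, hl⟩, hea, r, hr⟩
    refine ⟨⟨hea, hae⟩, e * r * e, ⟨r, rfl⟩, ?_, ?_⟩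
    · rw [← mul_assoc, ← mul_assoc, hae, hr, he.eq]
    · calc e * r * e * a = l * a * r * (e * a) := by rw [hl, mul_assoc]
        _ = l * (a * r * a) := by rw [hea]; simp only [mul_assoc]
        _ = e := by rw [hr, hea, hl]
  · rintro ⟨⟨hea, hae⟩, b, -, hab, hba⟩
    exact ⟨⟨hae, b, hba⟩, hea, b, hab⟩

theorem mem_corner_of_greenH (he : IsIdempotentElem e) (h : greenH a e) : a ∈ corner e :=
  ((greenH_iff_exists_inverse_mem_corner he).1 h).1

theorem map_idempotent_of_surjOn_corner {φ : M → N} (he : IsIdempotentElem e)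
    (hf : IsIdempotentElem f) (hmaps : Set.MapsTo φ (corner e) (corner f))
    (hsurj : Set.SurjOn φ (corner e) (corner f))
    (hmul : ∀ x ∈ corner e, ∀ y ∈ corner e, φ (x * y) = φ x * φ y) : φ e = f := by
  have he_mem := self_mem_corner he
  obtain ⟨x, hx, hxf⟩ := hsurj (self_mem_corner hf)
  calc φ e = φ e * f := ((mem_corner_iff hf).1 (hmaps he_mem)).2.symm
    _ = φ (e * x) := by rw [hmul e he_mem x hx, hxf]
    _ = f := by rw [((mem_corner_iff he).1 hx).1, hxf]

theorem bijOn_greenH_of_bijOn_corner {φ : M → N} (he : IsIdempotentElem e)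
    (hf : IsIdempotentElem f) (hφ : Set.BijOn φ (corner e) (corner f))
    (hmul : ∀ x ∈ corner e, ∀ y ∈ corner e, φ (x * y) = φ x * φ y) :
    Set.BijOn φ {x | greenH x e} {w | greenH w f} := by
  have hφe : φ e = f := map_idempotent_of_surjOn_corner he hf hφ.mapsTo hφ.surjOn hmul
  have he_mem := self_mem_corner he
  refine ⟨fun a ha => ?_, hφ.injOn.mono fun a => mem_corner_of_greenH he, fun w hw => ?_⟩
  · obtain ⟨ha, b, hb, hab, hba⟩ := (greenH_iff_exists_inverse_mem_corner he).1 ha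
    refine (greenH_iff_exists_inverse_mem_corner hf).2
      ⟨hφ.mapsTo ha, φ b, hφ.mapsTo hb, ?_, ?_⟩
    · rw [← hmul a ha b hb, hab, hφe]
    · rw [← hmul b hb a ha, hba, hφe]
  · obtain ⟨hw, z, hz, hwz, hzw⟩ := (greenH_iff_exists_inverse_mem_corner hf).1 hw
    obtain ⟨a, ha, rfl⟩ := hφ.surjOn hw
    obtain ⟨b, hb, rfl⟩ := hφ.surjOn hz
    refine ⟨a, (greenH_iff_exists_inverse_mem_corner he).2 ⟨ha, b, hb, ?_, ?_⟩, rfl⟩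
    · exact hφ.injOn (mul_mem ha hb) he_mem (by rw [hmul a ha b hb, hwz, hφe])
    · exact hφ.injOn (mul_mem hb ha) he_mem (by rw [hmul b hb a ha, hzw, hφe])

end MaximalSubgroups

section Coordinates

open Subsemigroup (corner mem_corner_iff)

variable {S : Type*}

/-- The coordinate of an element of `T*R₂` selected by `α ∈ R₂`: the second one for `σ`, the first
one for `τ`. Left multiplication by an element with last component `α` depends, apart from the last
component, only on this coordinate. -/
def coord : R2 → S × S × R2 → S
  | R2.σ, x => x.2.1
  | R2.τ, x => x.1

theorem coord_diag (α β : R2) (w : S) : coord α (w, w, β) = w := by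
  cases α <;> rfl

variable [Semigroup S]

theorem mul_eq_coord (x y : S × S × R2) :
    x * y = (x.1 * coord x.2.2 y, x.2.1 * coord x.2.2 y, y.2.2) := by
  obtain ⟨_, _, _ | _⟩ := x <;> rfl

theorem coord_mul (α : R2) (x y : S × S × R2) :
    coord α (x * y) = coord α x * coord x.2.2 y := by
  rw [mul_eq_coord]
  cases α <;> rfl

theorem isIdempotentElem_coord {e : S × S × R2} (he : IsIdempotentElem e) :
    IsIdempotentElem (coord e.2.2 e) :=
  (coord_mul e.2.2 e e).symm.trans (congrArg (coord e.2.2) he)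

theorem snd_snd_eq_of_mem_corner {e x : S × S × R2} (hx : x ∈ corner e) : x.2.2 = e.2.2 := by
  obtain ⟨r, rfl⟩ := hx
  exact congrArg (·.2.2) (mul_eq_coord (e * r) e)

theorem coord_mul_of_mem_corner {e x : S × S × R2} (hx : x ∈ corner e) (y : S × S × R2) :
    coord e.2.2 (x * y) = coord e.2.2 x * coord e.2.2 y := by
  rw [coord_mul, snd_snd_eq_of_mem_corner hx]

theorem mapsTo_coord_corner {e : S × S × R2} (he : IsIdempotentElem e) :
    Set.MapsTo (coord (S := S) e.2.2) (corner e) (corner (coord e.2.2 e)) := by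
  intro x hx
  obtain ⟨hex, hxe⟩ := (mem_corner_iff he).1 hx
  refine (mem_corner_iff (isIdempotentElem_coord he)).2 ⟨?_, ?_⟩
  · rw [← coord_mul, hex]
  · rw [← coord_mul_of_mem_corner hx, hxe]

theorem injOn_coord_corner {e : S × S × R2} (he : IsIdempotentElem e) :
    Set.InjOn (coord (S := S) e.2.2) (corner e) := by
  intro x hx y hy hxy
  rw [← ((mem_corner_iff he).1 hx).1, ← ((mem_corner_iff he).1 hy).1, mul_eq_coord e x,
    mul_eq_coord e y, hxy, snd_snd_eq_of_mem_corner hx, snd_snd_eq_of_mem_corner hy]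

theorem mul_diag_mem_corner {e : S × S × R2} (he : IsIdempotentElem e) {w : S}
    (hw : w ∈ corner (coord e.2.2 e)) : e * (w, w, e.2.2) ∈ corner e := by
  have hwe : (w, w, e.2.2) * e = (w, w, e.2.2) := by
    rw [mul_eq_coord, ((mem_corner_iff (isIdempotentElem_coord he)).1 hw).2]
  exact (mem_corner_iff he).2 ⟨by rw [← mul_assoc, he.eq], by rw [mul_assoc, hwe]⟩

theorem coord_mul_diag {e : S × S × R2} (he : IsIdempotentElem e) {w : S}
    (hw : w ∈ corner (coord e.2.2 e)) : coord e.2.2 (e * (w, w, e.2.2)) = w := by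
  rw [coord_mul, coord_diag, ((mem_corner_iff (isIdempotentElem_coord he)).1 hw).1]

theorem bijOn_coord_corner {T : Subsemigroup (S × S × R2)} {e : T} (he : IsIdempotentElem e)
    (hT : ∀ w ∈ corner (coord e.1.2.2 e.1), (w, w, e.1.2.2) ∈ T) :
    Set.BijOn (fun x : T => coord e.1.2.2 x.1) (corner e) (corner (coord e.1.2.2 e.1)) := by
  have he' : IsIdempotentElem (e : S × S × R2) := congrArg Subtype.val he
  refine ⟨fun x hx => mapsTo_coord_corner he' ((coe_mem_corner_iff he).2 hx),
    fun x hx y hy hxy => ?_, fun w hw => ?_⟩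
  · exact Subtype.ext (injOn_coord_corner he' ((coe_mem_corner_iff he).2 hx)
      ((coe_mem_corner_iff he).2 hy) hxy)
  · exact ⟨e * ⟨_, hT w hw⟩, (coe_mem_corner_iff he).1 (mul_diag_mem_corner he' hw),
      coord_mul_diag he' hw⟩

theorem bijOn_coord_greenH {T : Subsemigroup (S × S × R2)} {e : T} (he : IsIdempotentElem e)
    (hT : ∀ w ∈ corner (coord e.1.2.2 e.1), (w, w, e.1.2.2) ∈ T) :
    Set.BijOn (fun x : T => coord e.1.2.2 x.1) {x | greenH x e}
      {w | greenH w (coord e.1.2.2 e.1)} :=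
  bijOn_greenH_of_bijOn_corner he (isIdempotentElem_coord (congrArg Subtype.val he))
    (bijOn_coord_corner he hT)
    fun _ hx y _ => coord_mul_of_mem_corner ((coe_mem_corner_iff he).2 hx) y

theorem coord_mul_of_greenH {T : Subsemigroup (S × S × R2)} {e x : T} (he : IsIdempotentElem e)
    (hx : greenH x e) (y : T) :
    coord e.1.2.2 (x * y).1 = coord e.1.2.2 x.1 * coord e.1.2.2 y.1 :=
  coord_mul_of_mem_corner ((coe_mem_corner_iff he).2 (mem_corner_of_greenH he hx)) y

theorem diag_mem_TS {w f g : S} (hf : IsIdempotentElem f) (hg : IsIdempotentElem g)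
    (hwf : w * f = w) (hgw : g * w = w) (α : R2) : (w, w, α) ∈ TS S := by
  have idem_mem {k : S} (hk : IsIdempotentElem k) : (k, k, R2.τ) ∈ TS S :=
    Subsemigroup.subset_closure
      ⟨by simp only [IsIdempotentElem, mul_eq_coord, coord_diag, hk.eq], 1, (one_mul _).symm⟩
  have hwf_mem : (w, f, R2.σ) ∈ TS S :=
    Subsemigroup.subset_closure
      ⟨by simp only [IsIdempotentElem, mul_eq_coord, coord, hwf, hf.eq], w,
        congrArg WithOne.coe hwf.symm⟩
  have hσ : (w, w, R2.σ) ∈ TS S := by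
    simpa only [mul_eq_coord, coord, hgw] using mul_mem (idem_mem hg) hwf_mem
  cases α with
  | σ => exact hσ
  | τ => simpa only [mul_eq_coord, coord, hwf] using mul_mem hσ (idem_mem hf)

theorem diag_mem_TS_of_mem_corner {w f : S} (hf : IsIdempotentElem f) (hw : w ∈ corner f)
    (α : R2) : (w, w, α) ∈ TS S :=
  have ⟨hfw, hwf⟩ := (mem_corner_iff hf).1 hw
  diag_mem_TS hf hf hwf hfw α

end Coordinates

theorem statement_13_general {S : Type*} [Semigroup S]
    (s t : S) (e : ↥(TS S)) (he : IsIdempotentElem e) :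
    ((e : S × S × R2) = (s, t, R2.σ) →
      (∀ x : ↥(TS S), greenH x e → greenH ((x : S × S × R2).2.1) t) ∧
      (∀ x y : ↥(TS S), greenH x e → greenH y e →
        ((x * y : ↥(TS S)) : S × S × R2).2.1 = (x : S × S × R2).2.1 * (y : S × S × R2).2.1) ∧
      Set.InjOn (fun x : ↥(TS S) => (x : S × S × R2).2.1) {x : ↥(TS S) | greenH x e} ∧
      Set.SurjOn (fun x : ↥(TS S) => (x : S × S × R2).2.1) {x : ↥(TS S) | greenH x e}
        {w : S | greenH w t}) ∧
    ((e : S × S × R2) = (s, t, R2.τ) →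
      (∀ x : ↥(TS S), greenH x e → greenH ((x : S × S × R2).1) s) ∧
      (∀ x y : ↥(TS S), greenH x e → greenH y e →
        ((x * y : ↥(TS S)) : S × S × R2).1 = (x : S × S × R2).1 * (y : S × S × R2).1) ∧
      Set.InjOn (fun x : ↥(TS S) => (x : S × S × R2).1) {x : ↥(TS S) | greenH x e} ∧
      Set.SurjOn (fun x : ↥(TS S) => (x : S × S × R2).1) {x : ↥(TS S) | greenH x e}
        {w : S | greenH w s}) := by
  have hf : IsIdempotentElem (coord e.1.2.2 e.1) := isIdempotentElem_coord (congrArg Subtype.val he)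
  have bij := bijOn_coord_greenH he fun _ hw => diag_mem_TS_of_mem_corner hf hw e.1.2.2
  have mul (x y : TS S) (hx : greenH x e) (_ : greenH y e) := coord_mul_of_greenH he hx y
  constructor <;>
  · intro h
    rw [h] at bij mul
    exact ⟨bij.mapsTo, mul, bij.injOn, bij.surjOn⟩

/-- the maximal subgroups of `T(S)` are isomorphic to maximal subgroups of `S`:
if `e = (s,t,σ)` is an idempotent of `T(S)`, the second projection is a multiplication
preserving bijection from the 𝓗-class `H_e` of `T(S)` onto the 𝓗-class `H_t` of `S`
(i.e. a group isomorphism between the maximal subgroups); if `e = (s,t,τ)`, the first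
projection is such a bijection from `H_e` onto `H_s`. -/
theorem statement_13 {S : Type*} [Semigroup S] (hS : IdemCovered S)
    (s t : S) (e : ↥(TS S)) (he : IsIdempotentElem e) :
    ((e : S × S × R2) = (s, t, R2.σ) →
      (∀ x : ↥(TS S), greenH x e → greenH ((x : S × S × R2).2.1) t) ∧
      (∀ x y : ↥(TS S), greenH x e → greenH y e →
        ((x * y : ↥(TS S)) : S × S × R2).2.1 = (x : S × S × R2).2.1 * (y : S × S × R2).2.1) ∧
      Set.InjOn (fun x : ↥(TS S) => (x : S × S × R2).2.1) {x : ↥(TS S) | greenH x e} ∧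
      Set.SurjOn (fun x : ↥(TS S) => (x : S × S × R2).2.1) {x : ↥(TS S) | greenH x e}
        {w : S | greenH w t}) ∧
    ((e : S × S × R2) = (s, t, R2.τ) →
      (∀ x : ↥(TS S), greenH x e → greenH ((x : S × S × R2).1) s) ∧
      (∀ x y : ↥(TS S), greenH x e → greenH y e →
        ((x * y : ↥(TS S)) : S × S × R2).1 = (x : S × S × R2).1 * (y : S × S × R2).1) ∧
      Set.InjOn (fun x : ↥(TS S) => (x : S × S × R2).1) {x : ↥(TS S) | greenH x e} ∧
      Set.SurjOn (fun x : ↥(TS S) => (x : S × S × R2).1) {x : ↥(TS S) | greenH x e}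
        {w : S | greenH w s}) :=
  statement_13_general s t e he

end SemibandEmbed
end
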